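/- Let G ⊊ ℝⁿ (n ≥ 2) be a domain. Suppose there exist z ∈ G and v ∈ ℝⁿ with v ≠ 0 such that the open ball of center z and radius |v| is contained in G and both endpoints z + v and z − v of its diameter lie on the boundary ∂G. Then for every c > 0 the function φ̂ᶜ_G(x,y) = log(1 + 2|x−y|/(c(d_G(x) + d_G(y)))) fails the triangle inequality: there exist x, y, w ∈ G with φ̂ᶜ_G(x,w) + φ̂ᶜ_G(w,y) < φ̂ᶜ_G(x,y). In particular, φ̂ᶜ_G is not a metric on G. -/

import Mathlib

/-- `f` is a metric on the subset `S`. -/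
def IsMetricOn {E : Type*} (S : Set E) (f : E → E → ℝ) : Prop :=
  (∀ x ∈ S, ∀ y ∈ S, 0 ≤ f x y) ∧ (∀ x ∈ S, ∀ y ∈ S, (f x y = 0 ↔ x = y)) ∧
  (∀ x ∈ S, ∀ y ∈ S, f x y = f y x) ∧
  (∀ x ∈ S, ∀ y ∈ S, ∀ z ∈ S, f x y ≤ f x z + f z y)

/-- The Euclidean distance from `x` to the boundary of `G` (equivalently, to the
complement of `G`, for open `G`). -/
noncomputable def distBd {n : ℕ} (G : Set (EuclideanSpace ℝ (Fin n)))
    (x : EuclideanSpace ℝ (Fin n)) : ℝ :=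
  Metric.infDist x Gᶜ

/-!
For every point `x` of the ball, `φ̂ᶜ_G(x, z) ≤ log (1 + 2 / c)`, because `|x - z|` does not exceed
`d_G(z)`. Two points moving symmetrically from `z` to the two ends of the diameter stay far apart
while their boundary distances tend to `0`, so `φ̂ᶜ_G` is unbounded on such pairs, and near the ends
it exceeds the cost, at most `2 log (1 + 2 / c)`, of the detour through `z`.
-/

open Filter Metric Topology

section PseudoMetricSpace

variable {X : Type*} [PseudoMetricSpace X] {G : Set X} {x y : X} {c r : ℝ}

/-- The function `φ̂ᶜ_G` whose triangle inequality is in question, in any pseudometric space; the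
boundary distance `d_G` is encoded as the distance to the complement of `G`. -/
noncomputable def phiHat (c : ℝ) (G : Set X) (x y : X) : ℝ :=
  Real.log (1 + 2 * dist x y / (c * (infDist x Gᶜ + infDist y Gᶜ)))

theorem phiHat_comm (c : ℝ) (G : Set X) (x y : X) : phiHat c G x y = phiHat c G y x := by
  rw [phiHat, phiHat, dist_comm, add_comm (infDist x Gᶜ)]

theorem phiHat_le_of_dist_le_infDist (hc : 0 < c) (h : dist x y ≤ infDist y Gᶜ) :
    phiHat c G x y ≤ Real.log (1 + 2 / c) := by
  have hx : 0 ≤ infDist x Gᶜ := infDist_nonneg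
  have hy : 0 ≤ infDist y Gᶜ := infDist_nonneg
  have hratio : dist x y / (infDist x Gᶜ + infDist y Gᶜ) ≤ 1 :=
    div_le_one_of_le₀ (by linarith) (by linarith)
  refine Real.log_le_log (by positivity) (add_le_add_right ?_ 1)
  calc 2 * dist x y / (c * (infDist x Gᶜ + infDist y Gᶜ))
      = 2 / c * (dist x y / (infDist x Gᶜ + infDist y Gᶜ)) := mul_div_mul_comm ..
    _ ≤ 2 / c := mul_le_of_le_one_right (by positivity) hratio

theorem le_infDist_compl_of_ball_subset (hG : Gᶜ.Nonempty) (h : ball x r ⊆ G) :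
    r ≤ infDist x Gᶜ :=
  (le_infDist hG).2 fun _ hy => not_lt.1 fun hlt => hy (h (mem_ball'.2 hlt))

end PseudoMetricSpace

section SeminormedSpace

variable {E : Type*} [SeminormedAddCommGroup E] [NormedSpace ℝ E] {G : Set E} {z v : E} {c t : ℝ}

theorem dist_add_smul_self (ht : 0 ≤ t) : dist (z + t • v) z = t * ‖v‖ := by
  rw [dist_self_add_left, norm_smul_of_nonneg ht]

theorem add_smul_mem_of_ball_subset (hball : ball z ‖v‖ ⊆ G) (hv : ‖v‖ ≠ 0) (ht₀ : 0 ≤ t)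
    (ht₁ : t < 1) : z + t • v ∈ G := by
  refine hball (mem_ball.2 ?_)
  rw [dist_add_smul_self ht₀]
  exact mul_lt_of_lt_one_left (by positivity) ht₁

theorem infDist_compl_add_smul (hball : ball z ‖v‖ ⊆ G) (hv : z + v ∉ G) (ht₀ : 0 ≤ t)
    (ht₁ : t ≤ 1) : infDist (z + t • v) Gᶜ = (1 - t) * ‖v‖ := by
  apply le_antisymm
  · calc infDist (z + t • v) Gᶜ ≤ dist (z + t • v) (z + v) := infDist_le_dist_of_mem hv
      _ = ‖(1 - t) • v‖ := by rw [dist_comm, dist_eq_norm]; congr 1; module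
      _ = (1 - t) * ‖v‖ := norm_smul_of_nonneg (sub_nonneg.2 ht₁) v
  · have hcenter : ‖v‖ ≤ infDist z Gᶜ := le_infDist_compl_of_ball_subset ⟨_, hv⟩ hball
    have hlip : infDist z Gᶜ ≤ infDist (z + t • v) Gᶜ + dist z (z + t • v) :=
      infDist_le_infDist_add_dist
    rw [dist_comm, dist_add_smul_self ht₀] at hlip
    linarith

theorem phiHat_add_smul_center_le (hc : 0 < c) (hball : ball z ‖v‖ ⊆ G) (hv : z + v ∉ G)
    (ht₀ : 0 ≤ t) (ht₁ : t ≤ 1) : phiHat c G (z + t • v) z ≤ Real.log (1 + 2 / c) := by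
  apply phiHat_le_of_dist_le_infDist hc
  calc dist (z + t • v) z = t * ‖v‖ := dist_add_smul_self ht₀
    _ ≤ ‖v‖ := mul_le_of_le_one_left (norm_nonneg v) ht₁
    _ ≤ infDist z Gᶜ := le_infDist_compl_of_ball_subset ⟨_, hv⟩ hball

theorem phiHat_add_smul_neg_add_smul (hv₀ : ‖v‖ ≠ 0) (hball : ball z ‖v‖ ⊆ G)
    (hvp : z + v ∉ G) (hvm : z + -v ∉ G) (ht₀ : 0 ≤ t) (ht₁ : t ≤ 1) :
    phiHat c G (z + t • -v) (z + t • v) = Real.log (1 + 2 * t / c * (1 - t)⁻¹) := by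
  have hdist : dist (z + t • -v) (z + t • v) = 2 * t * ‖v‖ := by
    rw [dist_comm, dist_eq_norm, ← norm_smul_of_nonneg (by positivity)]
    congr 1
    module
  have hballm : ball z ‖-v‖ ⊆ G := by rwa [norm_neg]
  rw [phiHat, hdist, infDist_compl_add_smul hballm hvm ht₀ ht₁,
    infDist_compl_add_smul hball hvp ht₀ ht₁, norm_neg]
  congr 2
  field_simp
  ring

theorem tendsto_phiHat_add_smul_neg_add_smul (hc : 0 < c) (hv₀ : ‖v‖ ≠ 0)
    (hball : ball z ‖v‖ ⊆ G) (hvp : z + v ∉ G) (hvm : z + -v ∉ G) :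
    Tendsto (fun t : ℝ => phiHat c G (z + t • -v) (z + t • v)) (𝓝[<] 1) atTop := by
  have hgap : Tendsto (fun t : ℝ => 1 - t) (𝓝[<] 1) (𝓝[>] 0) := by
    refine tendsto_nhdsWithin_iff.2 ⟨?_, ?_⟩
    · exact ((continuous_const.sub continuous_id).tendsto' 1 0 (sub_self 1)).mono_left
        nhdsWithin_le_nhds
    · filter_upwards [self_mem_nhdsWithin] with t ht using sub_pos.2 (Set.mem_Iio.1 ht)
  have hcoeff : Tendsto (fun t : ℝ => 2 * t / c) (𝓝[<] 1) (𝓝 (2 * 1 / c)) :=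
    ((continuous_const.mul continuous_id).div_const c).continuousWithinAt
  have hlog : Tendsto (fun t : ℝ => Real.log (1 + 2 * t / c * (1 - t)⁻¹)) (𝓝[<] 1) atTop :=
    Real.tendsto_log_atTop.comp <| tendsto_atTop_add_const_left _ 1 <|
      hcoeff.pos_mul_atTop (by positivity) (tendsto_inv_nhdsGT_zero.comp hgap)
  refine hlog.congr' ?_
  filter_upwards [Ioo_mem_nhdsLT zero_lt_one] with t ht
  exact (phiHat_add_smul_neg_add_smul hv₀ hball hvp hvm ht.1.le ht.2.le).symm

theorem stmt4_general (hv₀ : ‖v‖ ≠ 0) (hball : ball z ‖v‖ ⊆ G) (hvp : z + v ∉ G)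
    (hvm : z - v ∉ G) (hc : 0 < c) :
    (∃ x ∈ G, ∃ y ∈ G, ∃ w ∈ G, phiHat c G x w + phiHat c G w y < phiHat c G x y) ∧
      ¬ IsMetricOn G (phiHat c G) := by
  rw [sub_eq_add_neg] at hvm
  have hballm : ball z ‖-v‖ ⊆ G := by rwa [norm_neg]
  obtain ⟨t, hlt, ht₀, ht₁⟩ := (((tendsto_phiHat_add_smul_neg_add_smul hc hv₀ hball hvp
    hvm).eventually_gt_atTop (Real.log (1 + 2 / c) + Real.log (1 + 2 / c))).and
    (Ioo_mem_nhdsLT zero_lt_one)).exists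
  have hx : z + t • -v ∈ G := add_smul_mem_of_ball_subset hballm (by rwa [norm_neg]) ht₀.le ht₁
  have hy : z + t • v ∈ G := add_smul_mem_of_ball_subset hball hv₀ ht₀.le ht₁
  have hz : z ∈ G := hball (mem_ball_self (by positivity))
  have hfail : phiHat c G (z + t • -v) z + phiHat c G z (z + t • v) <
      phiHat c G (z + t • -v) (z + t • v) := by
    rw [phiHat_comm c G z]
    exact (add_le_add (phiHat_add_smul_center_le hc hballm hvm ht₀.le ht₁.le)
      (phiHat_add_smul_center_le hc hball hvp ht₀.le ht₁.le)).trans_lt hlt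
  exact ⟨⟨_, hx, _, hy, z, hz, hfail⟩,
    fun ⟨_, _, _, htriangle⟩ => hfail.not_ge (htriangle _ hx _ hy z hz)⟩

end SeminormedSpace

theorem stmt4 (n : ℕ) (hn : 2 ≤ n) (G : Set (EuclideanSpace ℝ (Fin n)))
    (hopen : IsOpen G) (hconn : IsConnected G) (hproper : G ≠ Set.univ)
    (z : EuclideanSpace ℝ (Fin n)) (hz : z ∈ G)
    (v : EuclideanSpace ℝ (Fin n)) (hv : v ≠ 0)
    (hball : Metric.ball z ‖v‖ ⊆ G)
    (hvp : z + v ∈ frontier G) (hvm : z - v ∈ frontier G)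
    (c : ℝ) (hc : 0 < c) :
    (∃ x ∈ G, ∃ y ∈ G, ∃ w ∈ G,
      Real.log (1 + 2 * dist x w / (c * (distBd G x + distBd G w))) +
        Real.log (1 + 2 * dist w y / (c * (distBd G w + distBd G y))) <
        Real.log (1 + 2 * dist x y / (c * (distBd G x + distBd G y)))) ∧
    ¬ IsMetricOn G
      (fun x y => Real.log (1 + 2 * dist x y / (c * (distBd G x + distBd G y)))) := by
  have hfrontier : ∀ p ∈ frontier G, p ∉ G := fun _ hp => (hopen.frontier_eq ▸ hp).2
  exact stmt4_general (norm_ne_zero_iff.2 hv) hball (hfrontier _ hvp) (hfrontier _ hvm) hc
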